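/- arXiv:2405.11217 — 5 statements merged into one kernel-verified Lean document; each statement's English description precedes it below -/
import Mathlib

section
/- Let f, g : ℂ → ℂ with g entire, and suppose f ∘ g = g ∘ f. Assume Property A in the escaping form for the pair (f, g): for every z ∈ ℂ, if ‖f^[n](z)‖ → ∞ as n → ∞ then ‖g(f^[n](z))‖ → ∞ as n → ∞. Then the escaping set I(f) is completely invariant under the composition f ∘ g: for every z ∈ ℂ, z ∈ I(f) if and only if (f ∘ g)(z) ∈ I(f). -/
open Filter

/-- The escaping set `I(f)`: points whose orbit tends to infinity in norm. -/
def escapingSet (f : ℂ → ℂ) : Set ℂ :=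
  {z | Tendsto (fun n : ℕ => ‖f^[n] z‖) atTop atTop}

/-- The filled-in Julia set `K(f)`: points with bounded orbit. -/
def filledJuliaSet (f : ℂ → ℂ) : Set ℂ :=
  {z | ∃ M : ℝ, ∀ n : ℕ, ‖f^[n] z‖ ≤ M}

/-- The bungee set `BU(f) = ℂ \ (I(f) ∪ K(f))`. -/
def bungeeSet (f : ℂ → ℂ) : Set ℂ :=
  Set.univ \ (escapingSet f ∪ filledJuliaSet f)

/-- If `g` is continuous and `g ∘ u` leaves every bounded set, then so does `u`. -/
theorem tendsto_norm_atTop_of_tendsto_norm_comp {α E F : Type*} [NormedAddCommGroup E]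
    [ProperSpace E] [NormedAddCommGroup F] {l : Filter α} {u : α → E} {g : E → F}
    (hg : Continuous g) (h : Tendsto (fun n => ‖g (u n)‖) l atTop) :
    Tendsto (fun n => ‖u n‖) l atTop := by
  refine tendsto_atTop.2 fun R => ?_
  obtain ⟨C, hC⟩ := (isCompact_closedBall (0 : E) R).exists_bound_of_continuousOn hg.continuousOn
  filter_upwards [h.eventually_gt_atTop C] with n hn
  by_contra! hR
  exact (hC (u n) (mem_closedBall_zero_iff.2 hR.le)).not_gt hn

theorem escapingSet_completely_invariant_under_comp
    (f g : ℂ → ℂ) (hg : Differentiable ℂ g) (hcomm : f ∘ g = g ∘ f)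
    (hA : ∀ z : ℂ, Tendsto (fun n : ℕ => ‖f^[n] z‖) atTop atTop →
      Tendsto (fun n : ℕ => ‖g (f^[n] z)‖) atTop atTop) :
    ∀ z : ℂ, z ∈ escapingSet f ↔ (f ∘ g) z ∈ escapingSet f := by
  intro z
  have orbit (n : ℕ) : f^[n] ((f ∘ g) z) = g (f^[n + 1] z) := by
    have hsemi : Function.Semiconj g f f := fun x => (congrFun hcomm x).symm
    exact ((hsemi.iterate_right (n + 1)) z).symm
  simp only [escapingSet, Set.mem_ofPred_eq, orbit]
  rw [tendsto_add_atTop_iff_nat (f := fun n => ‖g (f^[n] z)‖) 1]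
  exact ⟨hA z, tendsto_norm_atTop_of_tendsto_norm_comp hg.continuous⟩
end

section
/- Let f, g : ℂ → ℂ with g entire, and suppose f ∘ g = g ∘ f. Assume Property A for the pair (f, g) in both forms: (escaping form) for every z ∈ ℂ, if ‖f^[n](z)‖ → ∞ as n → ∞ then ‖g(f^[n](z))‖ → ∞ as n → ∞; (bounded form) for every z ∈ ℂ, if the sequence (g(f^[n](z)))_{n∈ℕ} is bounded then the sequence (f^[n](z))_{n∈ℕ} is bounded. Then the bungee set BU(f) is completely invariant under g: for every z ∈ ℂ, z ∈ BU(f) if and only if g(z) ∈ BU(f). -/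
open Filter

/-- A continuous self-map of `ℂ` is bounded on closed balls. -/
theorem exists_norm_le_of_continuous {g : ℂ → ℂ} (hg : Continuous g) (R : ℝ) :
    ∃ C : ℝ, ∀ w : ℂ, ‖w‖ ≤ R → ‖g w‖ ≤ C := by
  obtain ⟨C, hC⟩ := (isCompact_closedBall (0 : ℂ) R).exists_bound_of_continuousOn hg.continuousOn
  exact ⟨C, fun w hw => hC w (mem_closedBall_zero_iff.2 hw)⟩

/-- If `g` is continuous and `g ∘ u` tends to infinity in norm, then so does `u`. -/
theorem tendsto_norm_atTop_of_continuous_comp {g : ℂ → ℂ} (hg : Continuous g) {u : ℕ → ℂ}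
    (h : Tendsto (fun n => ‖g (u n)‖) atTop atTop) : Tendsto (fun n => ‖u n‖) atTop atTop := by
  refine tendsto_atTop.2 fun R => ?_
  obtain ⟨C, hC⟩ := exists_norm_le_of_continuous hg R
  filter_upwards [h.eventually_gt_atTop C] with n hn
  by_contra! hlt
  exact absurd (hC _ hlt.le) (not_le.2 hn)

theorem bungeeSet_completely_invariant_under_commuting
    (f g : ℂ → ℂ) (hg : Differentiable ℂ g) (hcomm : f ∘ g = g ∘ f)
    (hAesc : ∀ z : ℂ, Tendsto (fun n : ℕ => ‖f^[n] z‖) atTop atTop →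
      Tendsto (fun n : ℕ => ‖g (f^[n] z)‖) atTop atTop)
    (hAbdd : ∀ z : ℂ, (∃ M : ℝ, ∀ n : ℕ, ‖g (f^[n] z)‖ ≤ M) →
      ∃ M : ℝ, ∀ n : ℕ, ‖f^[n] z‖ ≤ M) :
    ∀ z : ℂ, z ∈ bungeeSet f ↔ g z ∈ bungeeSet f := by
  intro z
  have hiter (n : ℕ) : f^[n] (g z) = g (f^[n] z) :=
    (show Function.Commute f g from congrFun hcomm).iterate_left n z
  have hesc : z ∈ escapingSet f ↔ g z ∈ escapingSet f := by
    simp only [escapingSet, Set.mem_ofPred_eq, hiter]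
    exact ⟨hAesc z, tendsto_norm_atTop_of_continuous_comp hg.continuous⟩
  have hbdd : z ∈ filledJuliaSet f ↔ g z ∈ filledJuliaSet f := by
    simp only [filledJuliaSet, Set.mem_ofPred_eq, hiter]
    refine ⟨fun ⟨M, hM⟩ => ?_, hAbdd z⟩
    obtain ⟨C, hC⟩ := exists_norm_le_of_continuous hg.continuous M
    exact ⟨C, fun n => hC _ (hM n)⟩
  simp only [bungeeSet, Set.mem_sdiff, Set.mem_union, hesc, hbdd, Set.mem_univ]
end

section
/- The entire functions f(z) = 1 + z + e^{−z} and g(z) = 1 + z + e^{−z} + 2πi (where i is the imaginary unit) commute: f ∘ g = g ∘ f. -/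
open Filter

theorem fatou_map_translate_commutes
    (f g : ℂ → ℂ)
    (hf : ∀ z : ℂ, f z = 1 + z + Complex.exp (-z))
    (hg : ∀ z : ℂ, g z = 1 + z + Complex.exp (-z) + 2 * Real.pi * Complex.I) :
    f ∘ g = g ∘ f := by
  funext z
  have exp_shift : Complex.exp (-(1 + z + Complex.exp (-z) + 2 * Real.pi * Complex.I)) =
      Complex.exp (-(1 + z + Complex.exp (-z))) := by
    rw [neg_add, ← sub_eq_add_neg, Complex.exp_periodic.sub_eq]
  simp only [Function.comp_apply, hf, hg, exp_shift]
  ring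
end

section
/- Let k ≥ 1 be a natural number, let a ∈ ℂ satisfy a^k = 1, and let c ∈ ℂ. Define f(z) = z·exp(c·z^k) and g(z) = a·f(z). Then for every n ∈ ℕ and every z ∈ ℂ, (f ∘ g)^[n](z) = a^n · f^[2n](z); in particular (f ∘ g)^[k] = f^[2k]. -/
open Filter

theorem root_of_unity_multiple_comp_iterate
    (k : ℕ) (hk : 1 ≤ k) (a c : ℂ) (ha : a ^ k = 1)
    (f g : ℂ → ℂ)
    (hf : ∀ z : ℂ, f z = z * Complex.exp (c * z ^ k))
    (hg : ∀ z : ℂ, g z = a * f z) :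
    (∀ n : ℕ, ∀ z : ℂ, (f ∘ g)^[n] z = a ^ n * f^[2 * n] z) ∧
      (f ∘ g)^[k] = f^[2 * k] := by
  have f_mul (b : ℂ) (hb : b ^ k = 1) (z : ℂ) : f (b * z) = b * f z := by
    rw [hf, hf, mul_pow, hb, one_mul, mul_assoc]
  have iterate_eq (n : ℕ) (z : ℂ) : (f ∘ g)^[n] z = a ^ n * f^[2 * n] z := by
    induction n with
    | zero => simp
    | succ n ih =>
      have han : (a ^ n) ^ k = 1 := by rw [pow_right_comm, ha, one_pow]
      rw [Function.iterate_succ_apply', ih, Function.comp_apply, hg, f_mul a ha,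
        f_mul _ han, f_mul _ han, show 2 * (n + 1) = 2 * n + 1 + 1 by ring,
        Function.iterate_succ_apply', Function.iterate_succ_apply', pow_succ']
      ring
  refine ⟨iterate_eq, funext fun z => ?_⟩
  rw [iterate_eq, ha, one_mul]
end

section
/- Let k ≥ 1 be a natural number, let a ∈ ℂ satisfy a^k = 1, and let c ∈ ℂ. Define f(z) = z·exp(c·z^k) and g(z) = a·f(z). Then f and g have equal escaping sets, equal filled-in Julia sets, and equal bungee sets: I(f) = I(g), K(f) = K(g), and BU(f) = BU(g). -/
open Filter

/-- If `f` commutes with multiplication by a number `a` of modulus one, then the orbits of `f` and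
`a * f` through the same point have the same norms. -/
theorem norm_iterate_eq_of_commute_mul_left {a : ℂ} (ha : ‖a‖ = 1) {f g : ℂ → ℂ}
    (hcomm : Function.Commute (a * ·) f) (hg : ∀ z, g z = a * f z) (n : ℕ) (z : ℂ) :
    ‖g^[n] z‖ = ‖f^[n] z‖ := by
  have hgf : g = (a * ·) ∘ f := funext hg
  rw [hgf, hcomm.comp_iterate, Function.comp_apply, mul_left_iterate, norm_mul, norm_pow, ha,
    one_pow, one_mul]

theorem root_of_unity_multiple_same_dynamics
    (k : ℕ) (hk : 1 ≤ k) (a c : ℂ) (ha : a ^ k = 1)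
    (f g : ℂ → ℂ)
    (hf : ∀ z : ℂ, f z = z * Complex.exp (c * z ^ k))
    (hg : ∀ z : ℂ, g z = a * f z) :
    escapingSet f = escapingSet g ∧ filledJuliaSet f = filledJuliaSet g ∧
      bungeeSet f = bungeeSet g := by
  have hnorm : ‖a‖ = 1 := Complex.norm_eq_one_of_pow_eq_one ha (by omega)
  have hcomm : Function.Commute (a * ·) f := fun z => by
    simp only [hf, mul_pow, ha, one_mul, mul_assoc]
  have hiter := norm_iterate_eq_of_commute_mul_left hnorm hcomm hg
  have hI : escapingSet f = escapingSet g := by simp only [escapingSet, hiter]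
  have hK : filledJuliaSet f = filledJuliaSet g := by simp only [filledJuliaSet, hiter]
  exact ⟨hI, hK, by rw [bungeeSet, bungeeSet, hI, hK]⟩
end
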